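/- Let Γ be a strongly connected digraph on vertices {1,…,n}, with total sandpile group S = S(Γ) and sandpile groups at the vertices S_i = S_i(Γ). If G is a finite abelian group such that for every i ∈ {1,…,n} there exists a surjective group homomorphism S_i → G, then there exists a surjective group homomorphism S → G. -/

import Mathlib

open Matrix

noncomputable section

/-- The Laplacian of the digraph on `Fin n` with edge multiplicities `d i j ∈ ℕ`:
`L i j = -d i j` for `i ≠ j` and `L i i = outdeg i - d i i = ∑_{k ≠ i} d i k`. -/
def digraphLaplacian {n : ℕ} (d : Fin n → Fin n → ℕ) : Matrix (Fin n) (Fin n) ℤ :=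
  Matrix.of fun i j => if i = j then ∑ k ∈ Finset.univ.erase i, (d i k : ℤ) else -(d i j : ℤ)

/-- `ℤ₀ⁿ`: the submodule of `ℤⁿ` of vectors whose coordinates sum to zero. -/
def zeroSum (n : ℕ) : Submodule ℤ (Fin n → ℤ) where
  carrier := {v | ∑ i, v i = 0}
  add_mem' := by
    intro x y hx hy
    simp only [Set.mem_setOf_eq, Pi.add_apply, Finset.sum_add_distrib] at *
    rw [hx, hy, add_zero]
  zero_mem' := by simp
  smul_mem' := by
    intro c x hx
    simp only [Set.mem_setOf_eq, Pi.smul_apply, smul_eq_mul, ← Finset.mul_sum] at *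
    rw [hx, mul_zero]

/-- The total sandpile group `S(Γ) = ℤ₀ⁿ / L(Γ)ℤⁿ`, where the Laplacian acts on row
vectors (so that its image lies in `ℤ₀ⁿ`). -/
abbrev totalSandpile {n : ℕ} (d : Fin n → Fin n → ℕ) : Type :=
  zeroSum n ⧸ Submodule.comap (zeroSum n).subtype
    (LinearMap.range (Matrix.mulVecLin (digraphLaplacian d)ᵀ))

/-- The sandpile group at the vertex `i`: `S_i(Γ) = ℤ^{n-1} / L_i ℤ^{n-1}`, where `L_i` is
the Laplacian with the `i`-th row and column removed. -/
abbrev vertexSandpile {n : ℕ} (d : Fin (n + 1) → Fin (n + 1) → ℕ) (i : Fin (n + 1)) : Type :=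
  (Fin n → ℤ) ⧸ LinearMap.range
    (Matrix.mulVecLin ((digraphLaplacian d).submatrix i.succAbove i.succAbove)ᵀ)

/-- A digraph with edge multiplicities `d` is strongly connected if any vertex can be
reached from any other through edges of positive multiplicity. -/
def StronglyConnected {n : ℕ} (d : Fin n → Fin n → ℕ) : Prop :=
  ∀ i j : Fin n, Relation.ReflTransGen (fun u v => 0 < d u v) i j

/-- A subgroup `R` of a finite abelian group `G` with `G = R + qG` for every prime `q` is `G`. -/
theorem AddSubgroup.eq_top_of_forall_prime {G : Type*} [AddCommGroup G] [Finite G]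
    (R : AddSubgroup G)
    (hR : ∀ q : ℕ, q.Prime → q ∣ Nat.card G → ∀ g : G, ∃ h : G, g - q • h ∈ R) : R = ⊤ := by
  by_contra hne
  obtain ⟨q, hq, hdvd⟩ := Nat.exists_prime_and_dvd (mt AddSubgroup.index_eq_one.mp hne)
  have : Fact q.Prime := ⟨hq⟩
  obtain ⟨x, hx⟩ := exists_prime_addOrderOf_dvd_card' (G := G ⧸ R) q hdvd
  have hsurj : Function.Surjective fun y : G ⧸ R => q • y := by
    intro y
    obtain ⟨g, rfl⟩ := QuotientAddGroup.mk_surjective y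
    obtain ⟨h, hh⟩ := hR q hq (hdvd.trans R.index_dvd_card) g
    refine ⟨(h : G ⧸ R), ?_⟩
    change ((q • h : G) : G ⧸ R) = (g : G ⧸ R)
    rw [QuotientAddGroup.eq, neg_add_eq_sub]
    exact hh
  have hx0 : x = 0 :=
    Finite.injective_iff_surjective.mpr hsurj (by simp [← hx, addOrderOf_nsmul_eq_zero])
  rw [hx0, addOrderOf_zero] at hx
  exact hq.one_lt.ne hx

/-- A singular square integer matrix has a primitive vector in its left kernel. -/
theorem Matrix.exists_primitive_vecMul_eq_zero {ι : Type*} [Fintype ι] [DecidableEq ι]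
    {M : Matrix ι ι ℤ} (hM : M.det = 0) :
    ∃ p : ι → ℤ, p ᵥ* M = 0 ∧ ∀ q : ℕ, q.Prime → ∃ i, ¬ (q : ℤ) ∣ p i := by
  obtain ⟨v, hv, hvM⟩ := Matrix.exists_vecMul_eq_zero_iff.mpr hM
  obtain ⟨k, hk⟩ := Function.ne_iff.mp hv
  obtain ⟨p, hp, hgcd⟩ := Finset.extract_gcd v ⟨k, Finset.mem_univ k⟩
  have hvp : v = Finset.univ.gcd v • p := by
    ext i
    simpa using hp i (Finset.mem_univ i)
  refine ⟨p, ?_, fun q hq => ?_⟩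
  · rw [hvp, Matrix.smul_vecMul] at hvM
    refine (smul_eq_zero.mp hvM).resolve_left fun h0 => hk ?_
    exact Finset.gcd_eq_zero_iff.mp h0 k (Finset.mem_univ k)
  · by_contra! hall
    have hdvd : (q : ℤ) ∣ 1 := hgcd ▸ Finset.dvd_gcd fun i _ => hall i
    exact (Nat.prime_iff_prime_int.mp hq).not_dvd_one hdvd

theorem digraphLaplacian_mulVec_one {n : ℕ} (d : Fin n → Fin n → ℕ) :
    digraphLaplacian d *ᵥ 1 = 0 := by
  ext i
  simp only [Matrix.mulVec, dotProduct, Pi.one_apply, mul_one]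
  rw [← Finset.add_sum_erase _ _ (Finset.mem_univ i),
    Finset.sum_congr rfl (g := fun k => -(d i k : ℤ))]
  · simp [digraphLaplacian]
  · intro k hk
    simp [digraphLaplacian, (Finset.ne_of_mem_erase hk).symm]

theorem det_digraphLaplacian {n : ℕ} (d : Fin (n + 1) → Fin (n + 1) → ℕ) :
    (digraphLaplacian d).det = 0 :=
  Matrix.exists_mulVec_eq_zero_iff.mp ⟨1, one_ne_zero, digraphLaplacian_mulVec_one d⟩

/-- Forgetting the `i`-th coordinate induces a map `ℤ₀ⁿ⁺¹ → S_i`. -/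
def zeroSumToVertexSandpile {n : ℕ} (d : Fin (n + 1) → Fin (n + 1) → ℕ) (i : Fin (n + 1)) :
    zeroSum (n + 1) →ₗ[ℤ] vertexSandpile d i :=
  Submodule.mkQ _ ∘ₗ LinearMap.funLeft ℤ ℤ i.succAbove ∘ₗ (zeroSum (n + 1)).subtype

theorem zeroSumToVertexSandpile_surjective {n : ℕ} (d : Fin (n + 1) → Fin (n + 1) → ℕ)
    (i : Fin (n + 1)) : Function.Surjective (zeroSumToVertexSandpile d i) := by
  intro y
  obtain ⟨w, rfl⟩ := Submodule.mkQ_surjective _ y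
  have hw : i.insertNth (-∑ k, w k) w ∈ zeroSum (n + 1) := by
    change ∑ k, (i.insertNth (-∑ k, w k) w : Fin (n + 1) → ℤ) k = 0
    simp [Fin.sum_univ_succAbove _ i]
  refine ⟨⟨_, hw⟩, congrArg (Submodule.mkQ _) ?_⟩
  ext k
  simp [LinearMap.funLeft_apply]

/-- If `p` is in the left kernel of the Laplacian, then `p i` annihilates the kernel of
`S_i → S`. -/
theorem smul_zeroSumToVertexSandpile_eq_zero {n : ℕ} (d : Fin (n + 1) → Fin (n + 1) → ℕ)
    {p : Fin (n + 1) → ℤ} (hp : p ᵥ* digraphLaplacian d = 0) (i : Fin (n + 1))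
    {v : zeroSum (n + 1)}
    (hv : (v : Fin (n + 1) → ℤ) ∈ LinearMap.range (Matrix.mulVecLin (digraphLaplacian d)ᵀ)) :
    p i • zeroSumToVertexSandpile d i v = 0 := by
  obtain ⟨c, hc⟩ := hv
  rw [← map_smul]
  refine (Submodule.Quotient.mk_eq_zero _).mpr
    ⟨fun k => (p i • c - c i • p) (i.succAbove k), ?_⟩
  have hmul : (p i • c - c i • p) ᵥ* digraphLaplacian d = p i • (v : Fin (n + 1) → ℤ) := by
    rw [Matrix.sub_vecMul, Matrix.smul_vecMul, Matrix.smul_vecMul, hp, ← hc,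
      Matrix.mulVecLin_apply, Matrix.mulVec_transpose, smul_zero, sub_zero]
  ext k
  have hk := congrFun hmul (i.succAbove k)
  rw [Matrix.vecMul, dotProduct, Fin.sum_univ_succAbove _ i] at hk
  simp only [Matrix.mulVecLin_apply, Matrix.mulVec_transpose, Matrix.vecMul, dotProduct,
    Matrix.submatrix_apply]
  simpa [mul_comm (c i)] using hk

/-- Weighted sums of maps `φ i` onto a finite abelian group are surjective when the weights can be
corrected at each prime: some `p i` is prime to `q`. -/
theorem exists_surjective_sum_smul {ι M G : Type*} [Fintype ι] [AddCommGroup M] [AddCommGroup G]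
    [Finite G] (φ : ι → M →ₗ[ℤ] G) (hφ : ∀ i, Function.Surjective (φ i)) (p : ι → ℤ)
    (hp : ∀ q : ℕ, q.Prime → ∃ i, ¬ (q : ℤ) ∣ p i) :
    ∃ a : ι → ℤ, Function.Surjective (∑ i, (a i * p i) • φ i : M →ₗ[ℤ] G) := by
  classical
  have : Nonempty ι := (hp 2 Nat.prime_two).nonempty
  choose! t ht using hp
  let a : ι → ℤ := fun i => ∏ q ∈ (Nat.card G).primeFactors with t q ≠ i, (q : ℤ)
  refine ⟨a, ?_⟩
  rw [← LinearMap.range_eq_top, ← Submodule.toAddSubgroup_inj, Submodule.top_toAddSubgroup]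
  refine AddSubgroup.eq_top_of_forall_prime _ fun q hq hqG g => ?_
  have hqZ : Prime (q : ℤ) := Nat.prime_iff_prime_int.mp hq
  have hmem : q ∈ (Nat.card G).primeFactors := Nat.mem_primeFactors.mpr ⟨hq, hqG, Nat.card_pos.ne'⟩
  have hat : ¬ (q : ℤ) ∣ a (t q) := by
    intro hdvd
    obtain ⟨r, hr, hqr⟩ := (hqZ.dvd_finsetProd_iff _).mp hdvd
    obtain ⟨hr, hne⟩ := Finset.mem_filter.mp hr
    have hqr' := (Nat.prime_dvd_prime_iff_eq hq (Nat.prime_of_mem_primeFactors hr)).mp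
      (Int.natCast_dvd_natCast.mp hqr)
    exact hne (congrArg t hqr'.symm)
  have ha : ∀ i, i ≠ t q → (q : ℤ) ∣ a i := fun i hi =>
    Finset.dvd_prod_of_mem (fun r : ℕ => (r : ℤ)) (Finset.mem_filter.mpr ⟨hmem, hi.symm⟩)
  obtain ⟨u, w, huw⟩ := (hqZ.coprime_iff_not_dvd.mpr (hqZ.not_dvd_mul hat (ht q hq))).symm
  obtain ⟨z, rfl⟩ := hφ (t q) g
  choose! b hb using ha
  refine ⟨w • φ (t q) z - ∑ i ∈ Finset.univ.erase (t q), (b i * p i) • φ i (u • z), u • z, ?_⟩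
  have hrest : ∑ i ∈ Finset.univ.erase (t q), (a i * p i) • φ i (u • z) =
      (q : ℤ) • ∑ i ∈ Finset.univ.erase (t q), (b i * p i) • φ i (u • z) := by
    rw [Finset.smul_sum]
    refine Finset.sum_congr rfl fun i hi => ?_
    rw [smul_smul, ← mul_assoc, ← hb i (Finset.ne_of_mem_erase hi)]
  have hone : φ (t q) z = (u * (a (t q) * p (t q))) • φ (t q) z + (w * q) • φ (t q) z := by
    rw [← add_smul, huw, one_smul]
  rw [LinearMap.sum_apply, ← Finset.add_sum_erase _ _ (Finset.mem_univ (t q))]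
  simp only [LinearMap.smul_apply]
  rw [hrest, map_smul, smul_smul, ← natCast_zsmul, smul_sub, smul_smul]
  rw [mul_comm u, mul_comm w] at hone
  rw [eq_sub_of_add_eq hone.symm]
  abel

/-- For a strongly connected digraph, if a finite abelian group `G` admits a surjection from
every vertex sandpile group `S_i`, then it admits a surjection from the total sandpile
group `S`. -/
theorem total_sandpile_surjects_of_vertex_surjects {n : ℕ}
    (d : Fin (n + 1) → Fin (n + 1) → ℕ) (hconn : StronglyConnected d)
    (G : Type*) [AddCommGroup G] [Finite G]
    (h : ∀ i : Fin (n + 1), ∃ f : vertexSandpile d i →+ G, Function.Surjective f) :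
    ∃ f : totalSandpile d →+ G, Function.Surjective f := by
  choose f hf using h
  obtain ⟨p, hpL, hp⟩ := Matrix.exists_primitive_vecMul_eq_zero (det_digraphLaplacian d)
  let φ : Fin (n + 1) → zeroSum (n + 1) →ₗ[ℤ] G :=
    fun i => (f i).toIntLinearMap ∘ₗ zeroSumToVertexSandpile d i
  obtain ⟨a, ha⟩ := exists_surjective_sum_smul φ
    (fun i => (hf i).comp (zeroSumToVertexSandpile_surjective d i)) p hp
  refine ⟨(Submodule.liftQ _ (∑ i, (a i * p i) • φ i) fun v hv => ?_).toAddMonoidHom, ?_⟩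
  · rw [LinearMap.mem_ker, LinearMap.sum_apply]
    refine Finset.sum_eq_zero fun i _ => ?_
    rw [LinearMap.smul_apply, mul_smul, LinearMap.comp_apply, ← map_smul,
      smul_zeroSumToVertexSandpile_eq_zero d hpL i hv, map_zero, smul_zero]
  · intro g
    obtain ⟨z, hz⟩ := ha g
    exact ⟨Submodule.Quotient.mk z, hz⟩

end
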